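/- Let M ∈ ℕ and define Φ⁻¹_M(p) := √2·S_M(2p − 1). If p ∈ [1/2, 1) and y ∈ ℝ satisfies Φ(y) = p, then y ≥ Φ⁻¹_M(p); and if p ∈ (0, 1/2] and y ∈ ℝ satisfies Φ(y) = p, then y ≤ Φ⁻¹_M(p). (The truncated Taylor approximation of the Gaussian quantile function under-estimates it on [1/2,1) and over-estimates it on (0,1/2].) -/

import Mathlib

/-!
Put `w y = ∫₀^y exp (-t²/2) / √2 dt`, so that `(√π / 2) (2 Φ(y) - 1) = w y` and the claim for `y ≥ 0`
reads `√2 T_M (w y) ≤ y`, where `T_M z = ∑_{k ≤ M} c_k z^(2k+1) / (2k+1)`.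

Let `P_M = T_M'` and let `R_M z = ∑_{k ≤ M} c_k z^(2k+2) / ((k+1)(2k+1))`, so that `R_M' = 2 T_M` and
`R_M 0 = 0`. All `c_k` are nonnegative, so the recursion for `c_k` gives
`P_{M+1} ≤ 1 + R_M P_M` (`coeffP_succ_le`). Induction on `M` yields `P_M (w y) ≤ exp (y²/2)`
for `y ≥ 0`: comparing derivatives in `y`, this bound implies `√2 T_M (w y) ≤ y`, which in turn
implies `R_M (w y) ≤ 1 - exp (-y²/2)`, and therefore
`P_{M+1} (w y) ≤ 1 + (1 - exp (-y²/2)) exp (y²/2) = exp (y²/2)`.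

The case `p ≤ 1/2` follows because `w` and `T_M` are odd.
-/

open Finset

/-- The standard normal cumulative distribution function. -/
noncomputable def stdNormalCDF (y : ℝ) : ℝ :=
  ∫ t in Set.Iic y, (1 / Real.sqrt (2 * Real.pi)) * Real.exp (-t ^ 2 / 2)

/-- Maclaurin coefficients of the inverse error function. -/
noncomputable def invErfCoeff : ℕ → ℝ
  | 0 => 1
  | k + 1 => ∑ m ∈ (Finset.range (k + 1)).attach,
      invErfCoeff m.1 * invErfCoeff (k - m.1) / ((m.1 + 1) * (2 * m.1 + 1))
decreasing_by
  · have := Finset.mem_range.mp m.2; omega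
  · have := Finset.mem_range.mp m.2; omega

/-- `S M x = ∑_{k=0}^{M} (c k / (2k+1)) * ((√π/2) * x)^(2k+1)`. -/
noncomputable def invErfPartial (M : ℕ) (x : ℝ) : ℝ :=
  ∑ k ∈ Finset.range (M + 1),
    (invErfCoeff k / (2 * k + 1)) * ((Real.sqrt Real.pi / 2) * x) ^ (2 * k + 1)

/-- Truncated Taylor approximation `Φ⁻¹_M(p) := √2 · S_M(2p − 1)` of the Gaussian
quantile function. -/
noncomputable def gaussQuantileApprox (M : ℕ) (p : ℝ) : ℝ :=
  Real.sqrt 2 * invErfPartial M (2 * p - 1)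

open MeasureTheory

lemma invErfCoeff_succ (k : ℕ) : invErfCoeff (k + 1) = ∑ m ∈ range (k + 1),
    invErfCoeff m * invErfCoeff (k - m) / (((m : ℝ) + 1) * (2 * m + 1)) := by
  rw [invErfCoeff]
  exact Finset.sum_attach (range (k + 1))
    (fun m => invErfCoeff m * invErfCoeff (k - m) / (((m : ℝ) + 1) * (2 * m + 1)))

lemma invErfCoeff_nonneg (k : ℕ) : 0 ≤ invErfCoeff k := by
  induction k using Nat.strong_induction_on with
  | _ k ih =>
    cases k with
    | zero => simp [invErfCoeff]
    | succ k =>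
      rw [invErfCoeff_succ]
      refine Finset.sum_nonneg fun m hm => ?_
      have hm' := Finset.mem_range.mp hm
      have h1 := ih m (by omega)
      have h2 := ih (k - m) (by omega)
      positivity

/-- `∑_{k ≤ M} c_k z^(2k+1) / (2k+1)`: the truncated series of the inverse of `z = ∫₀^u exp (-s²) ds`. -/
noncomputable def coeffT (M : ℕ) (z : ℝ) : ℝ :=
  ∑ k ∈ range (M + 1), (invErfCoeff k / (2 * k + 1)) * z ^ (2 * k + 1)

/-- The derivative `∑_{k ≤ M} c_k z^(2k)` of `coeffT M`. -/
noncomputable def coeffP (M : ℕ) (z : ℝ) : ℝ :=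
  ∑ k ∈ range (M + 1), invErfCoeff k * z ^ (2 * k)

/-- The antiderivative of `2 * coeffT M` vanishing at `0`. -/
noncomputable def coeffR (M : ℕ) (z : ℝ) : ℝ :=
  ∑ k ∈ range (M + 1), (invErfCoeff k / (((k : ℝ) + 1) * (2 * k + 1))) * z ^ (2 * k + 2)

lemma hasDerivAt_coeffT (M : ℕ) (z : ℝ) : HasDerivAt (coeffT M) (coeffP M z) z := by
  unfold coeffT coeffP
  refine HasDerivAt.fun_sum fun k _ => ?_
  have h := (hasDerivAt_pow (2 * k + 1) z).const_mul (invErfCoeff k / (2 * k + 1))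
  refine h.congr_deriv ?_
  have : (2 * (k : ℝ) + 1) ≠ 0 := by positivity
  push_cast
  field_simp

lemma hasDerivAt_coeffR (M : ℕ) (z : ℝ) : HasDerivAt (coeffR M) (2 * coeffT M z) z := by
  unfold coeffT coeffR
  rw [Finset.mul_sum]
  refine HasDerivAt.fun_sum fun k _ => ?_
  have h := (hasDerivAt_pow (2 * k + 2) z).const_mul
    (invErfCoeff k / (((k : ℝ) + 1) * (2 * k + 1)))
  refine h.congr_deriv ?_
  have : (2 * (k : ℝ) + 1) ≠ 0 := by positivity
  have : ((k : ℝ) + 1) ≠ 0 := by positivity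
  push_cast
  field_simp

lemma coeffP_nonneg (M : ℕ) (z : ℝ) : 0 ≤ coeffP M z := by
  refine Finset.sum_nonneg fun k _ => mul_nonneg (invErfCoeff_nonneg k) ?_
  rw [pow_mul]
  positivity

lemma coeffT_neg (M : ℕ) (z : ℝ) : coeffT M (-z) = -coeffT M z := by
  unfold coeffT
  rw [← Finset.sum_neg_distrib]
  refine Finset.sum_congr rfl fun k _ => ?_
  rw [Odd.neg_pow ⟨k, rfl⟩]
  ring

/-- The recursion for the coefficients says that `coeffP (M + 1)` is the truncation of
`1 + coeffR M * coeffP M` at degree `2M + 2`; the discarded terms are nonnegative. -/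
lemma coeffP_succ_le (M : ℕ) (z : ℝ) : coeffP (M + 1) z ≤ 1 + coeffR M z * coeffP M z := by
  have hz : ∀ n : ℕ, 0 ≤ z ^ (2 * n) := fun n => by rw [pow_mul]; positivity
  set f : ℕ → ℕ → ℝ := fun m j =>
    (invErfCoeff m / (((m : ℝ) + 1) * (2 * m + 1)) * z ^ (2 * m + 2)) *
      (invErfCoeff j * z ^ (2 * j)) with hf
  have hfn : ∀ m j, 0 ≤ f m j := fun m j => by
    have h1 := invErfCoeff_nonneg m
    have h2 := invErfCoeff_nonneg j
    have h3 := hz (m + 1)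
    have h4 := hz j
    rw [show 2 * (m + 1) = 2 * m + 2 by ring] at h3
    simp only [hf]
    positivity
  have key : coeffP (M + 1) z = 1 + ∑ k ∈ range (M + 1), ∑ m ∈ range (k + 1), f m (k - m) := by
    unfold coeffP
    rw [Finset.sum_range_succ', add_comm]
    congr 1
    · simp [invErfCoeff]
    · refine Finset.sum_congr rfl fun k _ => ?_
      rw [invErfCoeff_succ, Finset.sum_mul]
      refine Finset.sum_congr rfl fun m hm => ?_
      have hm' := Finset.mem_range.mp hm
      obtain ⟨j, rfl⟩ : ∃ j, k = m + j := ⟨k - m, by omega⟩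
      simp only [hf, Nat.add_sub_cancel_left]
      ring
  rw [key, Finset.sum_range_diag_flip]
  unfold coeffR coeffP
  rw [Finset.sum_mul_sum]
  gcongr 1 + ?_
  refine Finset.sum_le_sum fun m _ => ?_
  exact Finset.sum_le_sum_of_subset_of_nonneg
    (Finset.range_subset_range.mpr (Nat.sub_le _ _)) fun j _ _ => hfn m j

/-- `(√π / 2) (2 Φ(y) - 1)` in integral form; see `scaled_stdNormalCDF`. -/
noncomputable def gaussW (y : ℝ) : ℝ := ∫ t in (0 : ℝ)..y, Real.exp (-t ^ 2 / 2) / √2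

lemma hasDerivAt_gaussW (y : ℝ) : HasDerivAt gaussW (Real.exp (-y ^ 2 / 2) / √2) y := by
  have hc : Continuous fun t : ℝ => Real.exp (-t ^ 2 / 2) / √2 := by fun_prop
  exact intervalIntegral.integral_hasDerivAt_right (hc.intervalIntegrable _ _)
    (hc.stronglyMeasurableAtFilter _ _) hc.continuousAt

lemma gaussW_zero : gaussW 0 = 0 := by simp [gaussW]

lemma gaussW_neg (y : ℝ) : gaussW (-y) = -gaussW y := by
  unfold gaussW
  have h := intervalIntegral.integral_comp_neg (a := 0) (b := y)
    (fun t : ℝ => Real.exp (-t ^ 2 / 2) / √2)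
  simp only [neg_zero, neg_sq] at h
  rw [h, ← intervalIntegral.integral_symm]

lemma gaussW_strictMono : StrictMono gaussW := by
  refine strictMono_of_deriv_pos fun y => ?_
  rw [(hasDerivAt_gaussW y).deriv]
  positivity

lemma scaled_stdNormalCDF (y : ℝ) : √Real.pi / 2 * (2 * stdNormalCDF y - 1) = gaussW y := by
  have hg : ∀ t : ℝ, Real.exp (-t ^ 2 / 2) = Real.exp (-(1 / 2) * t ^ 2) := fun t => by
    congr 1; ring
  have hint : Integrable fun t : ℝ => Real.exp (-t ^ 2 / 2) := by
    simp_rw [hg]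
    exact integrable_exp_neg_mul_sq (by norm_num)
  have h0 : ∫ t in Set.Iic (0 : ℝ), Real.exp (-t ^ 2 / 2) = √(2 * Real.pi) / 2 := by
    have h := integral_comp_neg_Ioi (0 : ℝ) (fun t : ℝ => Real.exp (-t ^ 2 / 2))
    simp only [neg_zero, neg_sq] at h
    rw [← h]
    simp_rw [hg]
    rw [integral_gaussian_Ioi]
    congr 2
    ring
  have h1 := intervalIntegral.integral_Iic_sub_Iic (a := 0) (b := y)
    (hint.integrableOn) (hint.integrableOn)
  unfold stdNormalCDF gaussW
  rw [integral_const_mul, intervalIntegral.integral_div, ← h1, h0,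
    Real.sqrt_mul (by norm_num : (0 : ℝ) ≤ 2)]
  have : √Real.pi ≠ 0 := (Real.sqrt_pos.mpr Real.pi_pos).ne'
  have h2 : √(2 : ℝ) ≠ 0 := by positivity
  field_simp

lemma le_of_hasDerivAt_le {f g f' g' : ℝ → ℝ} (hf : ∀ x, HasDerivAt f (f' x) x)
    (hg : ∀ x, HasDerivAt g (g' x) x) (h0 : f 0 = g 0) (h : ∀ x, 0 ≤ x → f' x ≤ g' x)
    {x : ℝ} (hx : 0 ≤ x) : f x ≤ g x := by
  have hd : ∀ x, HasDerivAt (fun x => g x - f x) (g' x - f' x) x := fun x => (hg x).sub (hf x)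
  have hm : MonotoneOn (fun x => g x - f x) (Set.Ici 0) := by
    refine monotoneOn_of_deriv_nonneg (convex_Ici 0)
      (fun x _ => (hd x).continuousAt.continuousWithinAt)
      (fun x _ => (hd x).differentiableAt.differentiableWithinAt) fun x hx => ?_
    rw [interior_Ici] at hx
    rw [(hd x).deriv]
    exact sub_nonneg.mpr (h x (le_of_lt hx))
  have := hm (Set.mem_Ici.mpr le_rfl) (Set.mem_Ici.mpr hx) hx
  simp only [h0, sub_self] at this
  linarith

lemma coeffT_gaussW_le {M : ℕ} (h : ∀ y, 0 ≤ y → coeffP M (gaussW y) ≤ Real.exp (y ^ 2 / 2))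
    {y : ℝ} (hy : 0 ≤ y) : √2 * coeffT M (gaussW y) ≤ y := by
  refine le_of_hasDerivAt_le (f := fun y => √2 * coeffT M (gaussW y)) (g := fun y => y)
    (fun x => ((hasDerivAt_coeffT M (gaussW x)).comp x (hasDerivAt_gaussW x)).const_mul √2)
    (fun x => hasDerivAt_id x) ?_ (fun x hx => ?_) hy
  · simp [gaussW_zero, coeffT]
  · have h2 : √(2 : ℝ) ≠ 0 := by positivity
    calc √2 * (coeffP M (gaussW x) * (Real.exp (-x ^ 2 / 2) / √2))
        = coeffP M (gaussW x) * Real.exp (-x ^ 2 / 2) := by field_simp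
      _ ≤ Real.exp (x ^ 2 / 2) * Real.exp (-x ^ 2 / 2) := by gcongr; exact h x hx
      _ = 1 := by rw [← Real.exp_add, ← Real.exp_zero]; congr 1; ring

lemma coeffR_gaussW_le {M : ℕ} (h : ∀ y, 0 ≤ y → √2 * coeffT M (gaussW y) ≤ y)
    {y : ℝ} (hy : 0 ≤ y) : coeffR M (gaussW y) ≤ 1 - Real.exp (-y ^ 2 / 2) := by
  have hd : ∀ x : ℝ, HasDerivAt (fun y : ℝ => 1 - Real.exp (-y ^ 2 / 2))
      (x * Real.exp (-x ^ 2 / 2)) x := fun x => by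
    have h1 : HasDerivAt (fun y : ℝ => -y ^ 2 / 2) (-x) x :=
      (((hasDerivAt_pow 2 x).neg).div_const 2).congr_deriv (by norm_num; ring)
    exact (h1.exp.const_sub 1).congr_deriv (by ring)
  refine le_of_hasDerivAt_le (f := fun y => coeffR M (gaussW y))
    (fun x => (hasDerivAt_coeffR M (gaussW x)).comp x (hasDerivAt_gaussW x))
    hd ?_ (fun x hx => ?_) hy
  · simp [gaussW_zero, coeffR]
  · have h2 : √(2 : ℝ) ≠ 0 := by positivity
    have hs : √(2 : ℝ) * √2 = 2 := Real.mul_self_sqrt (by norm_num)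
    calc 2 * coeffT M (gaussW x) * (Real.exp (-x ^ 2 / 2) / √2)
        = (√2 * √2) * coeffT M (gaussW x) * (Real.exp (-x ^ 2 / 2) / √2) := by rw [hs]
      _ = (√2 * coeffT M (gaussW x)) * Real.exp (-x ^ 2 / 2) := by field_simp
      _ ≤ x * Real.exp (-x ^ 2 / 2) := by gcongr; exact h x hx

lemma coeffP_gaussW_le (M : ℕ) : ∀ y, 0 ≤ y → coeffP M (gaussW y) ≤ Real.exp (y ^ 2 / 2) := by
  induction M with
  | zero =>
    intro y _
    simp only [coeffP, invErfCoeff, zero_add, Finset.sum_range_one, mul_zero, pow_zero, mul_one]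
    exact Real.one_le_exp (by positivity)
  | succ M ih =>
    intro y hy
    have hR := coeffR_gaussW_le (fun y hy => coeffT_gaussW_le ih hy) hy
    have hE : (0 : ℝ) ≤ 1 - Real.exp (-y ^ 2 / 2) := by
      rw [sub_nonneg, Real.exp_le_one_iff]
      nlinarith [sq_nonneg y]
    calc coeffP (M + 1) (gaussW y)
        ≤ 1 + coeffR M (gaussW y) * coeffP M (gaussW y) := coeffP_succ_le M _
      _ ≤ 1 + (1 - Real.exp (-y ^ 2 / 2)) * Real.exp (y ^ 2 / 2) := by
        gcongr
        · exact coeffP_nonneg M _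
        · exact ih y hy
      _ = Real.exp (y ^ 2 / 2) := by
        have : Real.exp (-y ^ 2 / 2) * Real.exp (y ^ 2 / 2) = 1 := by
          rw [← Real.exp_add, ← Real.exp_zero]; congr 1; ring
        linear_combination -this

/-- The truncated Taylor approximation of the Gaussian quantile function
under-estimates it on `[1/2, 1)` and over-estimates it on `(0, 1/2]`. -/
theorem gaussQuantileApprox_bounds (M : ℕ) (p y : ℝ) :
    (1 / 2 ≤ p → p < 1 → stdNormalCDF y = p → gaussQuantileApprox M p ≤ y) ∧
    (0 < p → p ≤ 1 / 2 → stdNormalCDF y = p → y ≤ gaussQuantileApprox M p) := by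
  have hT : ∀ y, 0 ≤ y → √2 * coeffT M (gaussW y) ≤ y :=
    fun y hy => coeffT_gaussW_le (coeffP_gaussW_le M) hy
  have hA : gaussQuantileApprox M (stdNormalCDF y) = √2 * coeffT M (gaussW y) := by
    rw [← scaled_stdNormalCDF]
    rfl
  have hW := scaled_stdNormalCDF y
  constructor
  · rintro hp - rfl
    rw [hA]
    refine hT y (gaussW_strictMono.le_iff_le.mp ?_)
    rw [gaussW_zero, ← hW]
    exact mul_nonneg (by positivity) (by linarith)
  · rintro - hp rfl
    rw [hA]
    have hy : y ≤ 0 := by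
      refine gaussW_strictMono.le_iff_le.mp ?_
      rw [gaussW_zero, ← hW]
      exact mul_nonpos_of_nonneg_of_nonpos (by positivity) (by linarith)
    have h := hT (-y) (by linarith)
    rw [gaussW_neg, coeffT_neg] at h
    linarith
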